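/- Let N ≥ 3 be an integer, f ≥ 3 an integer, and let (f_1,...,f_N) be a nondecreasing integer sequence with f_1 ≥ 3, f_N = f, and Φ(f_1,...,f_N) < 0. Then Φ(f_1,...,f_N) ≤ Φ(3,7,f) = -1/42 + 1/f. -/

import Mathlib

/-- Combinatorial curvature of a vertex pattern. -/
noncomputable def Phi (N : ℕ) (f : Fin N → ℕ) : ℝ :=
  1 - (N : ℝ) / 2 + ∑ i, (1 : ℝ) / (f i)

lemma inv_le_of_le (k n : ℕ) (hk : 0 < k) (h : k ≤ n) : (1 : ℝ) / n ≤ 1 / k := by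
  apply one_div_le_one_div_of_le
  · exact_mod_cast hk
  · exact_mod_cast h

/-- Any negatively curved vertex pattern whose largest entry is `f` has
curvature at most `Φ(3,7,f) = -1/42 + 1/f`. -/
theorem stmt13 (N : ℕ) (hN : 3 ≤ N) (f : ℕ) (hf : 3 ≤ f)
    (p : Fin N → ℕ) (hmono : Monotone p) (h3 : ∀ i, 3 ≤ p i)
    (hlast : p ⟨N - 1, by omega⟩ = f) (hneg : Phi N p < 0) :
    Phi N p ≤ -(1 / 42) + 1 / (f : ℝ) ∧
      Phi 3 ![3, 7, f] = -(1 / 42) + 1 / (f : ℝ) := by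
  have hfpos : (0 : ℝ) < 1 / (f : ℝ) := by
    have : (0 : ℝ) < f := by exact_mod_cast (by omega : 0 < f)
    positivity
  refine ⟨?_, ?_⟩
  · obtain ⟨M, rfl⟩ : ∃ M, N = M + 1 := ⟨N - 1, by omega⟩
    have hl : p (Fin.last M) = f := hlast
    unfold Phi at hneg ⊢
    rw [Fin.sum_univ_castSucc, hl] at hneg ⊢
    by_cases hM4 : 4 ≤ M
    · have hS : ∑ i : Fin M, (1 : ℝ) / (p i.castSucc) ≤ M * (1 / 3) := by
        calc _ ≤ ∑ i : Fin M, (1 : ℝ) / 3 :=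
              Finset.sum_le_sum fun i _ => by
                simpa using inv_le_of_le 3 _ (by norm_num) (h3 i.castSucc)
          _ = _ := by simp
      have : (4 : ℝ) ≤ M := by exact_mod_cast hM4
      push_cast
      linarith
    · obtain rfl | rfl : M = 2 ∨ M = 3 := by omega
      · rw [Fin.sum_univ_two] at hneg ⊢
        have ha := h3 (Fin.castSucc 0)
        have hab : p (Fin.castSucc 0) ≤ p (Fin.castSucc 1) := hmono (by decide)
        generalize p (Fin.castSucc 0) = a at *
        generalize p (Fin.castSucc 1) = b at *
        push_cast at hneg ⊢
        by_cases h5 : 5 ≤ a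
        · have h1 := inv_le_of_le 5 a (by norm_num) h5
          have h2 := inv_le_of_le 5 b (by norm_num) (by omega)
          norm_num at *
          linarith
        · obtain rfl | rfl : a = 3 ∨ a = 4 := by omega
          · by_cases h7 : 7 ≤ b
            · have h2 := inv_le_of_le 7 b (by norm_num) h7
              norm_num at *
              linarith
            · exfalso
              have hb : b = 3 ∨ b = 4 ∨ b = 5 ∨ b = 6 := by omega
              rcases hb with rfl | rfl | rfl | rfl <;> push_cast at hneg <;> linarith
          · by_cases h7 : 5 ≤ b
            · have h2 := inv_le_of_le 5 b (by norm_num) h7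
              norm_num at *
              linarith
            · exfalso
              obtain rfl : b = 4 := by omega
              push_cast at hneg
              linarith
      · rw [Fin.sum_univ_three] at hneg ⊢
        have ha := h3 (Fin.castSucc 0)
        have hab : p (Fin.castSucc 0) ≤ p (Fin.castSucc 1) := hmono (by decide)
        have hbc : p (Fin.castSucc 1) ≤ p (Fin.castSucc 2) := hmono (by decide)
        generalize p (Fin.castSucc 0) = a at *
        generalize p (Fin.castSucc 1) = b at *
        generalize p (Fin.castSucc 2) = c at *
        push_cast at hneg ⊢
        by_cases h4 : 4 ≤ c
        · have h1 := inv_le_of_le 3 a (by norm_num) ha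
          have h2 := inv_le_of_le 3 b (by norm_num) (by omega)
          have h3 := inv_le_of_le 4 c (by norm_num) h4
          norm_num at *
          linarith
        · exfalso
          obtain rfl : c = 3 := by omega
          obtain rfl : b = 3 := by omega
          obtain rfl : a = 3 := by omega
          push_cast at hneg
          linarith
  · simp [Phi, Fin.sum_univ_three]
    ring
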